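/- arXiv:2208.07154 — 2 statements merged into one kernel-verified Lean document; each statement's English description precedes it below -/
import Mathlib

section
/- For every irrational x ∈ (0,1) and every n ≥ 1, writing s_n = q_{n−1}/q_n for the ratio of consecutive convergent denominators of the odd continued fraction expansion of x, one has: a_n(x) ≥ 3 if and only if 0 < s_n < g², and a_n(x) = 1 if and only if g² < s_n < G. -/
open Real MeasureTheory Filter Set

namespace OCF

/-- The golden ratio `G = (1+√5)/2`. -/
noncomputable def G : ℝ := (1 + Real.sqrt 5) / 2

/-- `g = (√5-1)/2`. -/
noncomputable def gg : ℝ := (Real.sqrt 5 - 1) / 2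

/-- The odd Gauss map. -/
noncomputable def T (x : ℝ) : ℝ :=
  if x = 0 then 0
  else if Odd ⌊1 / x⌋ then Int.fract (1 / x) else 1 - Int.fract (1 / x)

/-- `eps x n` is `ε_n(x)`; by convention `ε_0(x) = 1`. -/
noncomputable def eps (x : ℝ) : ℕ → ℤ
  | 0 => 1
  | n + 1 => if Odd ⌊1 / (T^[n] x)⌋ then 1 else -1

/-- `a x n` is the `n`-th odd partial quotient `a_n(x)` (for `n ≥ 1`). -/
noncomputable def a (x : ℝ) : ℕ → ℤ
  | 0 => 1
  | n + 1 => if Odd ⌊1 / (T^[n] x)⌋ then ⌊1 / (T^[n] x)⌋ else 1 + ⌊1 / (T^[n] x)⌋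

/-- `p x (n+1)` is the convergent numerator `p_n`; `p x 0 = p_{-1} = 1`, `p x 1 = p_0 = 0`. -/
noncomputable def p (x : ℝ) : ℕ → ℝ
  | 0 => 1
  | 1 => 0
  | n + 2 => (a x (n + 1) : ℝ) * p x (n + 1) + (eps x n : ℝ) * p x n

/-- `q x (n+1)` is the convergent denominator `q_n`; `q x 0 = q_{-1} = 0`, `q x 1 = q_0 = 1`. -/
noncomputable def q (x : ℝ) : ℕ → ℝ
  | 0 => 0
  | 1 => 1
  | n + 2 => (a x (n + 1) : ℝ) * q x (n + 1) + (eps x n : ℝ) * q x n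

end OCF

open OCF

/-!
With `s_n = q_{n-1}/q_n` the recurrence for `q_n` reads `s_{n+1} = 1/(a_{n+1} + ε_n s_n)`. The whole
argument is that `-g² < ε_n s_n < G` is preserved: if `a_{n+1} = 1`, the denominator lies in
`(1 - g², 1 + G) = (1/G, 1/g²)`, so `g² < s_{n+1} < G`, and if `a_{n+1} ≥ 3`, it exceeds
`3 - g² = 1/g²`, so `0 < s_{n+1} < g²`. The sign `ε_{n+1} = -1` is only possible in the second case.
-/

namespace OCF

/-- The ratio `s_n = q_{n-1}/q_n` of consecutive convergent denominators, written with the shifted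
index of `q`. -/
noncomputable def s (x : ℝ) (n : ℕ) : ℝ := q x n / q x (n + 1)

variable {x t A : ℝ} {n : ℕ}

theorem G_eq_goldenRatio : G = goldenRatio := rfl

theorem gg_eq_goldenRatio_sub_one : gg = goldenRatio - 1 := by
  unfold gg goldenRatio
  ring

theorem gg_sq : gg ^ 2 = 2 - goldenRatio := by
  rw [gg_eq_goldenRatio_sub_one]
  linear_combination goldenRatio_sq

theorem gg_sq_pos : 0 < gg ^ 2 := by
  linarith [gg_sq, goldenRatio_lt_two]

theorem gg_sq_lt_G : gg ^ 2 < G := by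
  rw [gg_sq, G_eq_goldenRatio]
  linarith [one_lt_goldenRatio]

theorem inv_gg_sq : (gg ^ 2)⁻¹ = 1 + G := by
  rw [gg_sq, G_eq_goldenRatio]
  refine inv_eq_of_mul_eq_one_right ?_
  linear_combination -goldenRatio_sq

theorem inv_G : G⁻¹ = 1 - gg ^ 2 := by
  rw [gg_sq, G_eq_goldenRatio]
  refine inv_eq_of_mul_eq_one_right ?_
  linear_combination goldenRatio_sq

theorem inv_one_add_mem_Ioo (ht : t ∈ Ioo (-gg ^ 2) G) : (1 + t)⁻¹ ∈ Ioo (gg ^ 2) G := by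
  have hG : 0 < G := goldenRatio_pos
  have lower : G⁻¹ < 1 + t := by linarith [inv_G, ht.1]
  have upper : 1 + t < (gg ^ 2)⁻¹ := by linarith [inv_gg_sq, ht.2]
  have pos : 0 < 1 + t := (inv_pos.2 hG).trans lower
  exact ⟨(lt_inv_comm₀ pos gg_sq_pos).1 upper, inv_lt_of_inv_lt₀ hG lower⟩

theorem inv_add_mem_Ioo_of_three_le (hA : 3 ≤ A) (ht : -gg ^ 2 < t) :
    (A + t)⁻¹ ∈ Ioo 0 (gg ^ 2) := by
  have lower : (gg ^ 2)⁻¹ < A + t := by linarith [inv_gg_sq, gg_sq, G_eq_goldenRatio]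
  have pos : 0 < A + t := (inv_pos.2 gg_sq_pos).trans lower
  exact ⟨inv_pos.2 pos, inv_lt_of_inv_lt₀ gg_sq_pos lower⟩

theorem T_mem_Icc (x : ℝ) : T x ∈ Icc 0 1 := by
  have nonneg := Int.fract_nonneg (1 / x)
  have lt_one := Int.fract_lt_one (1 / x)
  unfold T
  split_ifs <;> constructor <;> linarith

theorem iterate_T_mem_Icc (hx : x ∈ Icc 0 1) (n : ℕ) : T^[n] x ∈ Icc 0 1 :=
  MapsTo.iterate (fun y _ => T_mem_Icc y) n hx

theorem irrational_T (hx : Irrational x) : Irrational (T x) := by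
  have hfract : Irrational (Int.fract (1 / x)) := by
    simpa only [one_div, Int.fract] using hx.inv.sub_intCast ⌊x⁻¹⌋
  unfold T
  split_ifs with hzero
  · exact absurd hzero hx.ne_zero
  · exact hfract
  · simpa only [Int.cast_one] using hfract.intCast_sub 1

theorem irrational_iterate_T (hx : Irrational x) (n : ℕ) : Irrational (T^[n] x) :=
  Function.Iterate.rec Irrational hx (fun _ => irrational_T) n

theorem odd_a (x : ℝ) (n : ℕ) : Odd (a x n) := by
  cases n with
  | zero => exact odd_one
  | succ n =>
    simp only [a]
    split_ifs with hodd
    · exact hodd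
    · exact odd_one.add_even (Int.not_odd_iff_even.1 hodd)

theorem abs_eps (x : ℝ) (n : ℕ) : |eps x n| = 1 := by
  cases n with
  | zero => rfl
  | succ n => simp only [eps]; split_ifs <;> rfl

theorem two_le_a_add_eps (hx : x ∈ Icc 0 1) (hT : T^[n] x ≠ 0) :
    2 ≤ a x (n + 1) + eps x (n + 1) := by
  obtain ⟨nonneg, le_one⟩ := iterate_T_mem_Icc hx n
  have one_le_floor : 1 ≤ ⌊1 / T^[n] x⌋ := by
    rw [Int.le_floor, Int.cast_one]
    exact one_le_one_div (nonneg.lt_of_ne' hT) le_one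
  simp only [a, eps]
  split_ifs with hodd
  · omega
  · obtain ⟨m, hm⟩ := Int.not_odd_iff_even.1 hodd
    omega

theorem a_eq_one_or_three_le (hx : x ∈ Icc 0 1) (hT : T^[n] x ≠ 0) :
    a x (n + 1) = 1 ∨ 3 ≤ a x (n + 1) := by
  have hsum := two_le_a_add_eps hx hT
  have heps : eps x (n + 1) ≤ 1 := (abs_le.1 (abs_eps x (n + 1)).le).2
  obtain ⟨m, hm⟩ := odd_a x (n + 1)
  omega

theorem eps_eq_one_of_a_eq_one (hx : x ∈ Icc 0 1) (hT : T^[n] x ≠ 0) (ha : a x (n + 1) = 1) :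
    eps x (n + 1) = 1 := by
  have hsum := two_le_a_add_eps hx hT
  have heps : eps x (n + 1) ≤ 1 := (abs_le.1 (abs_eps x (n + 1)).le).2
  omega

theorem s_succ (hq : q x (n + 1) ≠ 0) :
    s x (n + 1) = (a x (n + 1) + eps x n * s x n)⁻¹ := by
  have hrec : q x (n + 2) = (a x (n + 1) + eps x n * s x n) * q x (n + 1) := by
    rw [s, add_mul, mul_assoc, div_mul_cancel₀ _ hq, q]
  rw [s, hrec, div_mul_cancel_right₀ hq]

theorem s_succ_mem_Ioo_of_a_eq_one (hq : q x (n + 1) ≠ 0)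
    (hs : eps x n * s x n ∈ Ioo (-gg ^ 2) G) (ha : a x (n + 1) = 1) :
    s x (n + 1) ∈ Ioo (gg ^ 2) G := by
  rw [s_succ hq, ha, Int.cast_one]
  exact inv_one_add_mem_Ioo hs

theorem s_succ_mem_Ioo_of_three_le_a (hq : q x (n + 1) ≠ 0)
    (hs : eps x n * s x n ∈ Ioo (-gg ^ 2) G) (ha : 3 ≤ a x (n + 1)) :
    s x (n + 1) ∈ Ioo 0 (gg ^ 2) := by
  rw [s_succ hq]
  exact inv_add_mem_Ioo_of_three_le (mod_cast ha) hs.1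

theorem eps_mul_mem_Ioo (ht : t ∈ Ioo 0 (gg ^ 2)) : eps x n * t ∈ Ioo (-gg ^ 2) G := by
  have habs : |eps x n * t| < gg ^ 2 := by
    rw [abs_mul, ← Int.cast_abs, abs_eps, Int.cast_one, one_mul, abs_of_pos ht.1]
    exact ht.2
  obtain ⟨lower, upper⟩ := abs_lt.1 habs
  exact ⟨lower, upper.trans gg_sq_lt_G⟩

theorem q_succ_ne_zero_and_eps_mul_s_mem_Ioo (hx : x ∈ Icc 0 1) (hT : ∀ k < n, T^[k] x ≠ 0) :
    q x (n + 1) ≠ 0 ∧ eps x n * s x n ∈ Ioo (-gg ^ 2) G := by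
  induction n with
  | zero =>
    have hG : 0 < G := goldenRatio_pos
    simp [q, s, gg_sq_pos, hG]
  | succ n ih =>
    obtain ⟨hq, hs⟩ := ih fun k hk => hT k (hk.trans n.lt_succ_self)
    have hTn : T^[n] x ≠ 0 := hT n n.lt_succ_self
    have q_ne_zero (hpos : 0 < s x (n + 1)) : q x (n + 2) ≠ 0 := (div_ne_zero_iff.1 hpos.ne').2
    rcases a_eq_one_or_three_le hx hTn with ha | ha
    · have hmem := s_succ_mem_Ioo_of_a_eq_one hq hs ha
      have hpos := gg_sq_pos.trans hmem.1
      refine ⟨q_ne_zero hpos, ?_⟩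
      rw [eps_eq_one_of_a_eq_one hx hTn ha, Int.cast_one, one_mul]
      exact ⟨(neg_neg_of_pos gg_sq_pos).trans hpos, hmem.2⟩
    · have hmem := s_succ_mem_Ioo_of_three_le_a hq hs ha
      exact ⟨q_ne_zero hmem.1, eps_mul_mem_Ioo hmem⟩

end OCF

/-- The hypothesis `hT` says that the expansion of `x` has at least `n` digits, so finite expansions
of rational numbers are included. -/
theorem ocf_sn_characterization_general {x : ℝ} (hx : x ∈ Icc 0 1) {n : ℕ} (hn : 1 ≤ n)
    (hT : ∀ k < n, T^[k] x ≠ 0) :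
    (3 ≤ a x n ↔ 0 < s x n ∧ s x n < gg ^ 2) ∧ (a x n = 1 ↔ gg ^ 2 < s x n ∧ s x n < G) := by
  obtain ⟨n, rfl⟩ := Nat.exists_eq_add_of_le' hn
  obtain ⟨hq, hs⟩ :=
    q_succ_ne_zero_and_eps_mul_s_mem_Ioo hx fun k hk => hT k (hk.trans n.lt_succ_self)
  rcases a_eq_one_or_three_le hx (hT n n.lt_succ_self) with ha | ha
  · have hmem := s_succ_mem_Ioo_of_a_eq_one hq hs ha
    exact ⟨iff_of_false (by omega) fun h => h.2.not_gt hmem.1, iff_of_true ha hmem⟩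
  · have hmem := s_succ_mem_Ioo_of_three_le_a hq hs ha
    exact ⟨iff_of_true ha hmem, iff_of_false (by omega) fun h => h.1.not_gt hmem.2⟩

/-- For every irrational `x ∈ (0,1)` and every `n ≥ 1`, with `s_n = q_{n-1}/q_n`:
`a_n(x) ≥ 3` iff `0 < s_n < g²`, and `a_n(x) = 1` iff `g² < s_n < G`. -/
theorem ocf_sn_characterization (x : ℝ) (hirr : Irrational x) (hx : x ∈ Set.Ioo (0 : ℝ) 1)
    (n : ℕ) (hn : 1 ≤ n) :
    ((3 ≤ OCF.a x n) ↔
      (0 < OCF.q x n / OCF.q x (n + 1) ∧ OCF.q x n / OCF.q x (n + 1) < gg ^ 2)) ∧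
    ((OCF.a x n = 1) ↔
      (gg ^ 2 < OCF.q x n / OCF.q x (n + 1) ∧ OCF.q x n / OCF.q x (n + 1) < G)) :=
  ocf_sn_characterization_general (Ioo_subset_Icc_self hx) hn
    fun k _ => (irrational_iterate_T hirr k).ne_zero
end

section
/- The measure ρ on the Borel subsets of [0,1] defined by ρ(A) = (3 log G)^{−1} ∫_A (1/(x+G−1) − 1/(x−G−1)) dx is a probability measure and is invariant under the odd Gauss map T, i.e. ρ(T^{−1}(A)) = ρ(A) for every Borel set A ⊆ [0,1]. -/
open Real MeasureTheory Filter Set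

open OCF

namespace OCF

/-- Schweiger's invariant measure `ρ` for the odd Gauss map. -/
noncomputable def rho : Measure ℝ :=
  (volume.restrict (Set.Icc (0 : ℝ) 1)).withDensity
    (fun x => ENNReal.ofReal ((3 * Real.log G)⁻¹ * (1 / (x + G - 1) - 1 / (x - G - 1))))

end OCF

/-! Each inverse branch of `T` has the form `y ↦ (n + y)⁻¹` (`n` odd) or `y ↦ (n + 1 - y)⁻¹`
(`n` even), with `n = ⌊1 / x⌋`. Invariance of a density under `T` means that it is fixed by the
transfer operator, the sum over the inverse branches of the density weighted by the Jacobian.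
Put `v t = c / (t + G - 2)` with `c = (3 log G)⁻¹`. The density of `ρ` is `v (1 + y) + v (3 - y)`,
and `G ^ 2 = G + 1` turns its contribution from the branch with denominator `t` into
`v t - v (t + 2)`. As the denominators of the branches `n` and `n + 2` differ by `2`, the transfer
series telescopes to `v` at the first two denominators `1 + y` and `3 - y`. The same formula makes
the total mass `∫ t in 1..3, v t = c log (G ^ 3) = 1`. -/

open scoped Topology ENNReal Function

section TransferOperator

variable {E ι : Type*} [NormedAddCommGroup E] [NormedSpace ℝ E] [FiniteDimensional ℝ E]
  [MeasurableSpace E] [BorelSpace E] [Countable ι] (μ : Measure E) [μ.IsAddHaarMeasure]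
  {T : E → E} {S A : Set E} {φ : ι → E → E} {φ' : ι → E → E →L[ℝ] E} {f : E → ℝ≥0∞}

theorem lintegral_preimage_inter_iUnion_image (hS : MeasurableSet S) (hA : MeasurableSet A)
    (hf : Measurable f) (hφ : ∀ i, ∀ y ∈ S, HasFDerivWithinAt (φ i) (φ' i y) S y)
    (hTφ : ∀ i, LeftInvOn T (φ i) S) (hdisj : Pairwise (Disjoint on fun i ↦ φ i '' S)) :
    ∫⁻ x in T ⁻¹' A ∩ ⋃ i, φ i '' S, f x ∂μ =
      ∫⁻ y in A ∩ S, ∑' i, ENNReal.ofReal |(φ' i y).det| * f (φ i y) ∂μ := by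
  have hAS : MeasurableSet (A ∩ S) := hA.inter hS
  have hsub : A ∩ S ⊆ S := inter_subset_right
  have hφAS : ∀ i, ∀ y ∈ A ∩ S, HasFDerivWithinAt (φ i) (φ' i y) (A ∩ S) y :=
    fun i y hy ↦ (hφ i y hy.2).mono hsub
  have hinj : ∀ i, InjOn (φ i) (A ∩ S) := fun i ↦ (hTφ i).injOn.mono hsub
  have hmeas : ∀ i, AEMeasurable (fun y ↦ ENNReal.ofReal |(φ' i y).det| * f (φ i y))
      (μ.restrict (A ∩ S)) := fun i ↦
    (aemeasurable_ofReal_abs_det_fderivWithin μ hAS (hφAS i)).mul <| hf.comp_aemeasurable <|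
      ContinuousOn.aemeasurable (fun y hy ↦ (hφAS i y hy).continuousWithinAt) hAS
  calc ∫⁻ x in T ⁻¹' A ∩ ⋃ i, φ i '' S, f x ∂μ
      = ∫⁻ x in ⋃ i, φ i '' (A ∩ S), f x ∂μ := by
        simp only [inter_iUnion, (hTφ _).image_inter']
    _ = ∑' i, ∫⁻ x in φ i '' (A ∩ S), f x ∂μ :=
        lintegral_iUnion (fun i ↦ measurable_image_of_fderivWithin hAS (hφAS i) (hinj i))
          (hdisj.mono fun i j h ↦ h.mono (image_mono hsub) (image_mono hsub)) f
    _ = ∑' i, ∫⁻ y in A ∩ S, ENNReal.ofReal |(φ' i y).det| * f (φ i y) ∂μ :=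
        tsum_congr fun i ↦
          lintegral_image_eq_lintegral_abs_det_fderiv_mul μ hAS (hφAS i) (hinj i) f
    _ = ∫⁻ y in A ∩ S, ∑' i, ENNReal.ofReal |(φ' i y).det| * f (φ i y) ∂μ :=
        (lintegral_tsum hmeas).symm

theorem measurePreserving_withDensity_of_transfer_eq (hT : Measurable T) (hS : MeasurableSet S)
    (hf : Measurable f) (hφ : ∀ i, ∀ y ∈ S, HasFDerivWithinAt (φ i) (φ' i y) S y)
    (hTφ : ∀ i, LeftInvOn T (φ i) S) (hdisj : Pairwise (Disjoint on fun i ↦ φ i '' S))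
    (hcover : S =ᵐ[μ] ⋃ i, φ i '' S)
    (hfix : ∀ y ∈ S, ∑' i, ENNReal.ofReal |(φ' i y).det| * f (φ i y) = f y) :
    MeasurePreserving T ((μ.restrict S).withDensity f) ((μ.restrict S).withDensity f) := by
  refine ⟨hT, Measure.ext fun A hA ↦ ?_⟩
  rw [Measure.map_apply hT hA, withDensity_apply _ (hT hA), withDensity_apply _ hA,
    Measure.restrict_restrict (hT hA), Measure.restrict_restrict hA]
  calc ∫⁻ x in T ⁻¹' A ∩ S, f x ∂μ
      = ∫⁻ x in T ⁻¹' A ∩ ⋃ i, φ i '' S, f x ∂μ :=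
        setLIntegral_congr ((ae_eq_refl _).inter hcover)
    _ = ∫⁻ y in A ∩ S, ∑' i, ENNReal.ofReal |(φ' i y).det| * f (φ i y) ∂μ :=
        lintegral_preimage_inter_iUnion_image μ hS hA hf hφ hTφ hdisj
    _ = ∫⁻ y in A ∩ S, f y ∂μ := setLIntegral_congr_fun (hA.inter hS) fun y hy ↦ hfix y hy.2

end TransferOperator

theorem hasSum_sub_add_of_antitone {f : ℕ → ℝ} {l : ℝ} (hf : Antitone f)
    (hl : Tendsto f atTop (𝓝 l)) (m : ℕ) :
    HasSum (fun n ↦ f n - f (n + m)) (∑ i ∈ Finset.range m, (f i - l)) := by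
  rw [hasSum_iff_tendsto_nat_of_nonneg fun n ↦ sub_nonneg.2 (hf (Nat.le_add_right n m))]
  have hpartial (N : ℕ) : ∑ n ∈ Finset.range N, (f n - f (n + m)) =
      ∑ i ∈ Finset.range m, (f i - f (N + i)) := by
    have hNm := Finset.sum_range_add f N m
    have hmN := Finset.sum_range_add f m N
    simp only [Finset.sum_sub_distrib, add_comm _ m] at hNm hmN ⊢
    linarith
  simp only [hpartial]
  exact tendsto_finsetSum _ fun i _ ↦ ((tendsto_add_atTop_iff_nat i).2 hl).const_sub (f i)

namespace OCF

theorem G_sq : G ^ 2 = G + 1 := goldenRatio_sq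

theorem one_lt_G : 1 < G := one_lt_goldenRatio

/-- The orientation of the cell `⌊1 / x⌋ = n`: the odd Gauss map keeps the fractional part of
`1 / x` if `n` is odd and reflects it in the unit interval if `n` is even. -/
noncomputable def orient (n : ℤ) (y : ℝ) : ℝ := if Odd n then y else 1 - y

/-- The denominator of the inverse branches of `T`: for `n ≥ 1` and `0 < y < 1`, the preimage of
`y` in the cell `⌊1 / x⌋ = n` is `x = (denom n y)⁻¹`. -/
noncomputable def denom (n : ℤ) (y : ℝ) : ℝ := n + orient n y

variable {n : ℤ} {y t : ℝ}

theorem orient_orient (n : ℤ) (y : ℝ) : orient n (orient n y) = y := by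
  unfold orient; split_ifs <;> ring

theorem orient_mem_Ioo (n : ℤ) (hy : y ∈ Ioo (0 : ℝ) 1) : orient n y ∈ Ioo (0 : ℝ) 1 := by
  unfold orient
  split_ifs
  · exact hy
  · exact ⟨sub_pos.2 hy.2, sub_lt_self 1 hy.1⟩

theorem T_eq_orient {x : ℝ} (hx : x ≠ 0) : T x = orient ⌊1 / x⌋ (Int.fract (1 / x)) :=
  if_neg hx

theorem measurable_T : Measurable T := by
  have hodd : MeasurableSet {x : ℝ | Odd ⌊1 / x⌋} :=
    (measurable_const.div measurable_id).floor (MeasurableSet.of_discrete (s := {n | Odd n}))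
  have hfract : Measurable fun x : ℝ ↦ Int.fract (1 / x) :=
    (measurable_const.div measurable_id).fract
  exact Measurable.ite (measurableSet_singleton 0) measurable_const
    (Measurable.ite hodd hfract (hfract.const_sub 1))

theorem denom_one (y : ℝ) : denom 1 y = 1 + y := by
  simp [denom, orient]

theorem denom_two (y : ℝ) : denom 2 y = 3 - y := by
  simp only [denom, orient, Int.not_odd_iff_even.2 even_two, if_false, Int.cast_ofNat]
  ring

theorem denom_add_two (n : ℤ) (y : ℝ) : denom (n + 2) y = denom n y + 2 := by
  simp only [denom, orient, Int.odd_add, even_two, iff_true]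
  push_cast
  ring

theorem floor_denom (n : ℤ) (hy : y ∈ Ioo (0 : ℝ) 1) : ⌊denom n y⌋ = n := by
  have h := orient_mem_Ioo n hy
  rw [denom, Int.floor_intCast_add, Int.floor_eq_zero_iff.2 ⟨h.1.le, h.2⟩, add_zero]

theorem fract_denom (n : ℤ) (hy : y ∈ Ioo (0 : ℝ) 1) : Int.fract (denom n y) = orient n y := by
  rw [Int.fract, floor_denom n hy, denom, add_sub_cancel_left]

theorem lt_denom (n : ℤ) (hy : y ∈ Ioo (0 : ℝ) 1) : n < denom n y :=
  lt_add_of_pos_right _ (orient_mem_Ioo n hy).1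

theorem denom_lt (n : ℤ) (hy : y ∈ Ioo (0 : ℝ) 1) : denom n y < n + 1 :=
  add_lt_add_right (orient_mem_Ioo n hy).2 _

theorem lt_denom_succ (k : ℕ) (hy : y ∈ Ioo (0 : ℝ) 1) : (k + 1 : ℝ) < denom (k + 1) y := by
  exact_mod_cast lt_denom (k + 1) hy

theorem one_lt_denom_succ (k : ℕ) (hy : y ∈ Ioo (0 : ℝ) 1) : 1 < denom (k + 1) y :=
  (le_add_of_nonneg_left k.cast_nonneg).trans_lt (lt_denom_succ k hy)

theorem strictMono_denom (hy : y ∈ Ioo (0 : ℝ) 1) : StrictMono fun n ↦ denom n y :=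
  strictMono_int_of_lt_succ fun n ↦
    (denom_lt n hy).trans (by exact_mod_cast lt_denom (n + 1) hy)

theorem T_inv_denom (hn : 0 ≤ n) (hy : y ∈ Ioo (0 : ℝ) 1) : T (denom n y)⁻¹ = y := by
  have hpos : 0 < denom n y := (Int.cast_nonneg hn).trans_lt (lt_denom n hy)
  rw [T_eq_orient (inv_ne_zero hpos.ne'), one_div, inv_inv, floor_denom n hy, fract_denom n hy,
    orient_orient]

theorem inv_denom_T {x : ℝ} (hx : x ≠ 0) : (denom ⌊1 / x⌋ (T x))⁻¹ = x := by
  rw [denom, T_eq_orient hx, orient_orient, Int.floor_add_fract, one_div, inv_inv]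

theorem T_mem_Ioo {x : ℝ} (hx : x ∉ range fun n : ℤ ↦ (n : ℝ)⁻¹) : T x ∈ Ioo (0 : ℝ) 1 := by
  have hx0 : x ≠ 0 := fun h ↦ hx ⟨0, by simp [h]⟩
  rw [T_eq_orient hx0]
  refine orient_mem_Ioo _ ⟨Int.fract_pos.2 fun h ↦ hx ⟨⌊1 / x⌋, ?_⟩, Int.fract_lt_one _⟩
  change (⌊1 / x⌋ : ℝ)⁻¹ = x
  rw [← h, one_div, inv_inv]

theorem pairwise_disjoint_image_inv_denom :
    Pairwise (Disjoint on fun k : ℕ ↦ (fun y ↦ (denom (k + 1) y)⁻¹) '' Ioo 0 1) := by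
  refine fun k l hkl ↦ disjoint_left.2 ?_
  rintro _ ⟨y, hy, rfl⟩ ⟨z, hz, hzy⟩
  have hfloor := congrArg Int.floor (inv_injective hzy)
  rw [floor_denom _ hz, floor_denom _ hy] at hfloor
  omega

theorem image_inv_denom_subset_Ioo (k : ℕ) :
    (fun y ↦ (denom (k + 1) y)⁻¹) '' Ioo 0 1 ⊆ Ioo 0 1 := by
  rintro _ ⟨y, hy, rfl⟩
  have h := one_lt_denom_succ k hy
  exact ⟨inv_pos.2 (zero_lt_one.trans h), inv_lt_one_of_one_lt₀ h⟩

theorem Ioo_sdiff_subset_iUnion_image_inv_denom :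
    Ioo 0 1 \ range (fun n : ℤ ↦ (n : ℝ)⁻¹) ⊆
      ⋃ k : ℕ, (fun y ↦ (denom (k + 1) y)⁻¹) '' Ioo 0 1 := by
  rintro x ⟨⟨hx0, hx1⟩, hx⟩
  have hfloor : 1 ≤ ⌊1 / x⌋ := Int.le_floor.2 (by simpa using (one_lt_inv₀ hx0).2 hx1 |>.le)
  obtain ⟨k, hk⟩ := Int.eq_ofNat_of_zero_le (sub_nonneg.2 hfloor)
  refine mem_iUnion.2 ⟨k, T x, T_mem_Ioo hx, ?_⟩
  simpa only [← hk, sub_add_cancel] using inv_denom_T hx0.ne'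

theorem Ioo_ae_eq_iUnion_image_inv_denom :
    (Ioo 0 1 : Set ℝ) =ᵐ[volume] ⋃ k : ℕ, (fun y ↦ (denom (k + 1) y)⁻¹) '' Ioo 0 1 := by
  have hnull : volume (range fun n : ℤ ↦ (n : ℝ)⁻¹) = 0 := (countable_range _).measure_zero _
  exact ((sdiff_null_ae_eq_self hnull).symm.le.trans
    Ioo_sdiff_subset_iUnion_image_inv_denom.eventuallyLE).antisymm
    (iUnion_subset image_inv_denom_subset_Ioo).eventuallyLE

theorem hasDerivAt_denom (n : ℤ) (y : ℝ) : HasDerivAt (denom n) (if Odd n then 1 else -1) y := by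
  unfold denom orient
  split_ifs
  · exact (hasDerivAt_id y).const_add _
  · exact ((hasDerivAt_id y).const_sub 1).const_add _

/-- The density of `rho` with respect to Lebesgue measure on `[0, 1]`. -/
noncomputable def density (x : ℝ) : ℝ :=
  (3 * log G)⁻¹ * (1 / (x + G - 1) - 1 / (x - G - 1))

/-- The function `v` whose differences `v t - v (t + 2)` are the terms of the transfer operator
applied to `density`, `t` being the denominator of the inverse branch. -/
noncomputable def potential (t : ℝ) : ℝ := (3 * log G)⁻¹ * (t + G - 2)⁻¹

theorem density_eq_potential_add (x : ℝ) :
    density x = potential (1 + x) + potential (3 - x) := by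
  have h : x - G - 1 = -(3 - x + G - 2) := by ring
  rw [density, potential, potential, h, one_div_neg_eq_neg_one_div]
  ring

theorem inv_sq_mul_density_inv (ht : 1 ≤ t) :
    (t ^ 2)⁻¹ * density t⁻¹ = potential t - potential (t + 2) := by
  have hG := one_lt_G
  have hfst : t⁻¹ + G - 1 = (t + G) / (t * G) := by
    field_simp
    linear_combination t * G_sq
  have hsnd : t⁻¹ - G - 1 = -(G ^ 2 * (t + G - 2) / t) := by
    field_simp
    linear_combination (G - 1 + t) * G_sq
  have ht0 : t ≠ 0 := by positivity
  have htG : t + G ≠ 0 := by positivity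
  have htG2 : t + G - 2 ≠ 0 := by linarith
  have hshift : t + 2 + G - 2 = t + G := by ring
  rw [density, potential, potential, hfst, hsnd, hshift, one_div_neg_eq_neg_one_div,
    mul_left_comm, ← mul_sub]
  congr 1
  field_simp
  linear_combination (G - 1) * (t + G) * G_sq

theorem potential_nonneg (ht : 1 ≤ t) : 0 ≤ potential t := by
  have hG := one_lt_G
  have hlog : 0 < log G := log_pos hG
  have htG : 0 < t + G - 2 := by linarith
  unfold potential
  positivity

theorem antitoneOn_potential : AntitoneOn potential (Ici 1) := by
  intro s hs t _ hst
  have hG := one_lt_G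
  have hlog : 0 < log G := log_pos hG
  have hsG : 0 < s + G - 2 := by linarith [mem_Ici.1 hs]
  unfold potential
  gcongr

theorem tendsto_potential_atTop : Tendsto potential atTop (𝓝 0) := by
  have hden : Tendsto (fun t : ℝ ↦ t + G - 2) atTop atTop := by
    simpa only [add_sub_assoc, id] using tendsto_atTop_add_const_right atTop (G - 2) tendsto_id
  have hscaled := (tendsto_inv_atTop_zero.comp hden).const_mul (3 * log G)⁻¹
  rwa [mul_zero] at hscaled

theorem tsum_potential_denom_sub (hy : y ∈ Ioo (0 : ℝ) 1) :
    ∑' k : ℕ, ENNReal.ofReal (potential (denom (k + 1) y) - potential (denom (k + 1) y + 2)) =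
      ENNReal.ofReal (density y) := by
  set v : ℕ → ℝ := fun k ↦ potential (denom (k + 1) y)
  have hanti : Antitone v := fun k l hkl ↦
    antitoneOn_potential (one_lt_denom_succ k hy).le (one_lt_denom_succ l hy).le
      ((strictMono_denom hy).monotone (by gcongr))
  have htop : Tendsto (fun k : ℕ ↦ denom (k + 1) y) atTop atTop :=
    tendsto_atTop_mono (fun k ↦ (lt_denom_succ k hy).le)
      (tendsto_atTop_add_const_right atTop 1 tendsto_natCast_atTop_atTop)
  have hsum := hasSum_sub_add_of_antitone hanti (tendsto_potential_atTop.comp htop) 2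
  have hstep (k : ℕ) : potential (denom (k + 1) y + 2) = v (k + 2) := by
    simp only [v, ← denom_add_two]
    congr 2
  have hvalue : ∑ i ∈ Finset.range 2, (v i - 0) = density y := by
    simp [v, Finset.sum_range_succ, density_eq_potential_add, denom_one, denom_two]
  simp only [hstep]
  rw [← ENNReal.ofReal_tsum_of_nonneg (fun k ↦ sub_nonneg.2 (hanti (Nat.le_add_right k 2)))
    hsum.summable, hsum.tsum_eq, hvalue]

theorem transfer_density_eq (hy : y ∈ Ioo (0 : ℝ) 1) :
    ∑' k : ℕ, ENNReal.ofReal |-(if Odd (k + 1 : ℤ) then 1 else -1) / denom (k + 1) y ^ 2| *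
      ENNReal.ofReal (density (denom (k + 1) y)⁻¹) = ENNReal.ofReal (density y) := by
  rw [← tsum_potential_denom_sub hy]
  refine tsum_congr fun k ↦ ?_
  rw [← inv_sq_mul_density_inv (one_lt_denom_succ k hy).le, ← ENNReal.ofReal_mul (abs_nonneg _)]
  congr 2
  split_ifs <;> simp [abs_div]

theorem rho_eq_withDensity :
    rho = (volume.restrict (Ioo 0 1)).withDensity fun x ↦ ENNReal.ofReal (density x) := by
  rw [Measure.restrict_congr_set Ioo_ae_eq_Icc, rho]
  rfl

theorem measurePreserving_T : MeasurePreserving T rho rho := by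
  have hmeas : Measurable fun x ↦ ENNReal.ofReal (density x) := by
    unfold density
    fun_prop
  have hderiv (k : ℕ) (y : ℝ) (hy : y ∈ Ioo (0 : ℝ) 1) :
      HasDerivWithinAt (fun y ↦ (denom (k + 1) y)⁻¹)
        (-(if Odd (k + 1 : ℤ) then 1 else -1) / denom (k + 1) y ^ 2) (Ioo 0 1) y :=
    ((hasDerivAt_denom (k + 1) y).fun_inv
      (zero_lt_one.trans (one_lt_denom_succ k hy)).ne').hasDerivWithinAt
  rw [rho_eq_withDensity]
  refine measurePreserving_withDensity_of_transfer_eq volume measurable_T measurableSet_Ioo hmeas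
    (fun k y hy ↦ (hderiv k y hy).hasFDerivWithinAt) (fun k y hy ↦ T_inv_denom (by positivity) hy)
    pairwise_disjoint_image_inv_denom Ioo_ae_eq_iUnion_image_inv_denom fun y hy ↦ ?_
  simpa only [ContinuousLinearMap.det_toSpanSingleton] using transfer_density_eq hy

theorem continuousOn_potential : ContinuousOn potential (Ici 1) := by
  have hG := one_lt_G
  refine continuousOn_const.mul (ContinuousOn.inv₀ (by fun_prop) fun t ht ↦ ?_)
  linarith [mem_Ici.1 ht]

theorem intervalIntegrable_potential {a b : ℝ} (ha : 1 ≤ a) (hb : 1 ≤ b) :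
    IntervalIntegrable potential volume a b :=
  (continuousOn_potential.mono fun _ ht ↦ (le_min ha hb).trans ht.1).intervalIntegrable

theorem integral_potential : ∫ t in (1 : ℝ)..3, potential t = 1 := by
  have hG := one_lt_G
  have hlog : 0 < log G := log_pos hG
  have hratio : (3 + G - 2) / (1 + G - 2) = G ^ 3 := by
    rw [div_eq_iff (by linarith)]
    linear_combination (-G ^ 2 - 1) * G_sq
  calc ∫ t in (1 : ℝ)..3, potential t
      = (3 * log G)⁻¹ * ∫ t in (1 : ℝ)..3, (t + (G - 2))⁻¹ := by
        simp only [potential, add_sub_assoc, intervalIntegral.integral_const_mul]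
    _ = (3 * log G)⁻¹ * log ((3 + G - 2) / (1 + G - 2)) := by
        rw [intervalIntegral.integral_comp_add_right (fun s ↦ s⁻¹),
          integral_inv_of_pos (by linarith) (by linarith), add_sub_assoc, add_sub_assoc]
    _ = 1 := by
        rw [hratio, log_pow]
        push_cast
        field_simp

theorem integral_density : ∫ x in (0 : ℝ)..1, density x = 1 := by
  have hleft : IntervalIntegrable potential volume 1 2 :=
    intervalIntegrable_potential le_rfl one_le_two
  have hright : IntervalIntegrable potential volume 2 3 :=
    intervalIntegrable_potential one_le_two (by norm_num)
  calc ∫ x in (0 : ℝ)..1, density x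
      = (∫ x in (0 : ℝ)..1, potential (1 + x)) + ∫ x in (0 : ℝ)..1, potential (3 - x) := by
        simp only [density_eq_potential_add]
        refine intervalIntegral.integral_add ?_ ?_
        · convert hleft.comp_add_left 1 using 1 <;> norm_num
        · convert (hright.comp_sub_left 3).symm using 1 <;> norm_num
    _ = (∫ t in (1 : ℝ)..2, potential t) + ∫ t in (2 : ℝ)..3, potential t := by
        rw [intervalIntegral.integral_comp_add_left, intervalIntegral.integral_comp_sub_left]
        norm_num
    _ = ∫ t in (1 : ℝ)..3, potential t :=
        intervalIntegral.integral_add_adjacent_intervals hleft hright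
    _ = 1 := integral_potential

theorem density_nonneg {x : ℝ} (hx : x ∈ Ioo (0 : ℝ) 1) : 0 ≤ density x := by
  rw [density_eq_potential_add]
  exact add_nonneg (potential_nonneg (by linarith [hx.1])) (potential_nonneg (by linarith [hx.2]))

theorem isProbabilityMeasure_rho : IsProbabilityMeasure rho := by
  have hint : IntegrableOn density (Ioo 0 1) :=
    (intervalIntegrable_iff_integrableOn_Ioo_of_le zero_le_one).1 <|
      intervalIntegral.intervalIntegrable_of_integral_ne_zero <|
        integral_density.trans_ne one_ne_zero
  have hnonneg : 0 ≤ᵐ[volume.restrict (Ioo 0 1)] density :=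
    ae_restrict_of_forall_mem measurableSet_Ioo fun _ hx ↦ density_nonneg hx
  refine isProbabilityMeasure_iff.2 ?_
  rw [rho_eq_withDensity, withDensity_apply _ .univ, Measure.restrict_univ,
    ← ofReal_integral_eq_lintegral_ofReal hint hnonneg, ← integral_Ioc_eq_integral_Ioo,
    ← intervalIntegral.integral_of_le zero_le_one, integral_density, ENNReal.ofReal_one]

end OCF

/-- The measure `ρ(A) = (3 log G)⁻¹ ∫_A (1/(x+G-1) - 1/(x-G-1)) dx` on the Borel subsets of
`[0,1]` is a probability measure invariant under the odd Gauss map `T`. -/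
theorem ocf_rho_invariant :
    IsProbabilityMeasure OCF.rho ∧
    ∀ A : Set ℝ, MeasurableSet A → A ⊆ Set.Icc (0 : ℝ) 1 →
      OCF.rho (T ⁻¹' A) = OCF.rho A := by
  exact ⟨isProbabilityMeasure_rho, fun _ hA _ ↦
    measurePreserving_T.measure_preimage hA.nullMeasurableSet⟩
end
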